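/- Let B be a supersoluble brace and let C be a maximal subbrace of B (a proper subbrace contained in no larger proper subbrace). Then |(B,+):(C,+)| = |(B,·):(C,·)| is a prime number; in particular, (C,+) is a maximal subgroup of (B,+) of prime index and (C,·) is a maximal subgroup of (B,·) of prime index. -/

import Mathlib

/-- A (skew left) brace: a set with an additive group structure (not necessarily abelian)
and a multiplicative group structure sharing the same identity, satisfying the skew
distributive law `a * (b + c) = a * b + -a + a * c`. -/
class SkewBrace (B : Type*) extends AddGroup B, Group B where
  one_eq_zero : (1 : B) = (0 : B)
  skew_distrib : ∀ a b c : B, a * (b + c) = a * b + -a + a * c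

/-- A group is supersoluble if it has a finite chain of normal subgroups with all
factors cyclic. -/
def Group.IsSupersoluble (G : Type*) [Group G] : Prop :=
  ∃ (n : ℕ) (H : ℕ → Subgroup G),
    H 0 = ⊥ ∧ H n = ⊤ ∧ (∀ i, (H i).Normal) ∧ (∀ i, i < n → H i ≤ H (i + 1)) ∧
    ∀ i, i < n → ∃ x ∈ H (i + 1), ∀ y ∈ H (i + 1), ∃ k : ℤ, (x ^ k)⁻¹ * y ∈ H i

namespace SkewBrace

variable {B : Type*} [SkewBrace B]

/-- `lam a b = -a + a * b`, i.e. `λ_a(b)`. -/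
def lam (a b : B) : B := -a + a * b

/-- the star operation `a ∗ b = λ_a(b) - b`. -/
def starOp (a b : B) : B := lam a b + -b

/-- the additive commutator `[a,b]_+`. -/
def addCommutator (a b : B) : B := -a + -b + a + b

/-- A subbrace of `B`: a subset that is a subgroup of both `(B,+)` and `(B,·)`. -/
structure Subbrace (B : Type*) [SkewBrace B] where
  carrier : Set B
  zero_mem : (0 : B) ∈ carrier
  add_mem : ∀ {a b : B}, a ∈ carrier → b ∈ carrier → a + b ∈ carrier
  neg_mem : ∀ {a : B}, a ∈ carrier → -a ∈ carrier
  mul_mem : ∀ {a b : B}, a ∈ carrier → b ∈ carrier → a * b ∈ carrier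
  inv_mem : ∀ {a : B}, a ∈ carrier → a⁻¹ ∈ carrier

/-- An ideal of `B`: a subbrace that is normal in `(B,+)` and in `(B,·)` and is
invariant under all the maps `λ_b`. -/
structure BraceIdeal (B : Type*) [SkewBrace B] extends Subbrace B where
  addConj_mem : ∀ (b : B) {a : B}, a ∈ carrier → b + a + -b ∈ carrier
  mulConj_mem : ∀ (b : B) {a : B}, a ∈ carrier → b * a * b⁻¹ ∈ carrier
  lam_mem : ∀ (b : B) {a : B}, a ∈ carrier → lam b a ∈ carrier

/-- The additive subgroup underlying a subbrace. -/
def Subbrace.addSubgroup (S : Subbrace B) : AddSubgroup B where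
  carrier := S.carrier
  zero_mem' := S.zero_mem
  add_mem' := S.add_mem
  neg_mem' := S.neg_mem

/-- The multiplicative subgroup underlying a subbrace. -/
def Subbrace.subgroup (S : Subbrace B) : Subgroup B where
  carrier := S.carrier
  one_mem' := by rw [one_eq_zero]; exact S.zero_mem
  mul_mem' := S.mul_mem
  inv_mem' := S.inv_mem

/-- Given ideals `J ≤ I` of `B`, `MemSocQuotRel I J x` says that the coset of `x`
lies in `Soc(I/J) = Ker(λ) ∩ Z(I/J, +)` (for `I = B` take `I = Set.univ`). -/
def MemSocQuotRel (I J : Set B) (x : B) : Prop :=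
  x ∈ I ∧ (∀ y ∈ I, -y + lam x y ∈ J) ∧ ∀ y ∈ I, -(y + x) + (x + y) ∈ J

/-- Given ideals `J ≤ I` of `B`, `MemZetaQuotRel I J x` says that the coset of `x`
lies in `ζ(I/J) = Soc(I/J) ∩ Z(I/J, ·)`. -/
def MemZetaQuotRel (I J : Set B) (x : B) : Prop :=
  MemSocQuotRel I J x ∧ ∀ y ∈ I, (y * x)⁻¹ * (x * y) ∈ J

/-- The coset of `x` lies in `Soc(B/J)`. -/
def MemSocQuot (J : Set B) (x : B) : Prop := MemSocQuotRel Set.univ J x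

/-- The coset of `x` lies in `ζ(B/J)`. -/
def MemZetaQuot (J : Set B) (x : B) : Prop := MemZetaQuotRel Set.univ J x

/-- For ideals `I ≤ J`, the additive group of the quotient `J/I` is infinite cyclic. -/
def QuotAddInfCyclic (I J : Set B) : Prop :=
  ∃ x ∈ J, (∀ y ∈ J, ∃ n : ℤ, -(n • x) + y ∈ I) ∧ ∀ n : ℤ, n • x ∈ I → n = 0

/-- For ideals `I ≤ J`, the quotient `J/I` has prime order `p`. -/
def QuotPrimeOrder (I J : Set B) (p : ℕ) : Prop :=
  p.Prime ∧ ∃ x ∈ J, x ∉ I ∧ p • x ∈ I ∧ ∀ y ∈ J, ∃ n : ℤ, -(n • x) + y ∈ I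

/-- A brace is supersoluble if it has a finite chain of ideals each factor of which
either is additively infinite cyclic and contained in the socle of the corresponding
quotient, or has prime order. -/
def IsSupersoluble (B : Type*) [SkewBrace B] : Prop :=
  ∃ (n : ℕ) (I : ℕ → BraceIdeal B),
    (I 0).carrier = {0} ∧ (I n).carrier = Set.univ ∧
    (∀ i, i < n → (I i).carrier ⊆ (I (i + 1)).carrier) ∧
    ∀ i, i < n →
      (QuotAddInfCyclic (I i).carrier (I (i + 1)).carrier ∧
        ∀ x ∈ (I (i + 1)).carrier, MemSocQuot (I i).carrier x) ∨
      ∃ p : ℕ, QuotPrimeOrder (I i).carrier (I (i + 1)).carrier p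

/-- The upper socle series of the brace (carrier of the ideal) `I`. -/
def socChainRel (I : Set B) : ℕ → Set B
  | 0 => {0}
  | n + 1 => {x | MemSocQuotRel I (socChainRel I n) x}

/-- The upper central series of the brace (carrier of the ideal) `I`. -/
def zetaChainRel (I : Set B) : ℕ → Set B
  | 0 => {0}
  | n + 1 => {x | MemZetaQuotRel I (zetaChainRel I n) x}

/-- The upper socle series `Soc_n(B)` of `B`. -/
def socChain (B : Type*) [SkewBrace B] : ℕ → Set B := socChainRel Set.univ

/-- The upper central series `ζ_n(B)` of `B`. -/
def zetaChain (B : Type*) [SkewBrace B] : ℕ → Set B := zetaChainRel Set.univ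

/-- A brace is centrally nilpotent if its upper central series reaches `B`. -/
def IsCentrallyNilpotent (B : Type*) [SkewBrace B] : Prop :=
  ∃ m : ℕ, zetaChain B m = Set.univ

end SkewBrace

namespace SkewBrace

section aux

variable {B : Type*} [SkewBrace B]

theorem mul_eq_add_lam (a b : B) : a * b = a + lam a b := by
  simp [lam]

theorem mul_zero_aux (a : B) : a * (0 : B) = a := by
  rw [← one_eq_zero, mul_one]

theorem lam_add (a b c : B) : lam a (b + c) = lam a b + lam a c := by
  simp only [lam, skew_distrib, add_assoc]

/-- `lam a` as an additive homomorphism. -/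
def lamHom (a : B) : B →+ B where
  toFun := lam a
  map_zero' := by simp [lam, mul_zero_aux]
  map_add' := lam_add a

theorem lamHom_apply (a b : B) : lamHom a b = lam a b := rfl

theorem lam_inv_self (a : B) : lam a a⁻¹ = -a := by
  simp [lam, one_eq_zero]

theorem inv_eq_neg_lam (a : B) : a⁻¹ = -lam a⁻¹ a := by
  simp [lam, one_eq_zero]

/-- Multiplicative and additive left cosets of an ideal coincide. -/
theorem BraceIdeal.inv_mul_mem_iff (K : BraceIdeal B) (a b : B) :
    a⁻¹ * b ∈ K.carrier ↔ -a + b ∈ K.carrier := by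
  constructor
  · intro h
    have h2 := K.lam_mem a h
    simpa [lam] using h2
  · intro h
    have h2 := K.lam_mem a⁻¹ h
    rw [lam_add] at h2
    have e : lam a⁻¹ (-a) + lam a⁻¹ b = a⁻¹ * b := by
      rw [← lamHom_apply, map_neg, lamHom_apply, ← inv_eq_neg_lam, ← mul_eq_add_lam]
    rwa [e] at h2

/-- The subbrace `C + I`. -/
def sumSub (C : Subbrace B) (I : BraceIdeal B) : Subbrace B where
  carrier := {b | ∃ c ∈ C.carrier, -c + b ∈ I.carrier}
  zero_mem := ⟨0, C.zero_mem, by simpa using I.zero_mem⟩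
  add_mem := by
    rintro a b ⟨c, hc, h⟩ ⟨d, hd, h'⟩
    refine ⟨c + d, C.add_mem hc hd, ?_⟩
    have := I.add_mem (I.addConj_mem (-d) h) h'
    simpa [add_assoc] using this
  neg_mem := by
    rintro a ⟨c, hc, h⟩
    refine ⟨-c, C.neg_mem hc, ?_⟩
    have := I.neg_mem (I.addConj_mem c h)
    simpa [add_assoc] using this
  mul_mem := by
    rintro a b ⟨c, hc, h⟩ ⟨d, hd, h'⟩
    refine ⟨c * d, C.mul_mem hc hd, ?_⟩
    rw [← I.inv_mul_mem_iff] at h h' ⊢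
    have := I.mul_mem (I.mulConj_mem (d⁻¹) h) h'
    simpa [mul_assoc] using this
  inv_mem := by
    rintro a ⟨c, hc, h⟩
    refine ⟨c⁻¹, C.inv_mem hc, ?_⟩
    rw [← I.inv_mul_mem_iff] at h ⊢
    have := I.inv_mem (I.mulConj_mem c h)
    simpa [mul_assoc] using this

theorem le_sumSub (C : Subbrace B) (I : BraceIdeal B) :
    C.carrier ⊆ (sumSub C I).carrier :=
  fun c hc => ⟨c, hc, by simpa using I.zero_mem⟩

theorem ideal_le_sumSub (C : Subbrace B) (I : BraceIdeal B) :
    I.carrier ⊆ (sumSub C I).carrier :=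
  fun c hc => ⟨0, C.zero_mem, by simpa using hc⟩

theorem sumSub_eq_univ (C : Subbrace B) (I : BraceIdeal B)
    (hmax : ∀ D : Subbrace B, C.carrier ⊆ D.carrier →
      D.carrier = C.carrier ∨ D.carrier = Set.univ)
    (hI : ¬ I.carrier ⊆ C.carrier) (b : B) : ∃ c ∈ C.carrier, -c + b ∈ I.carrier := by
  rcases hmax (sumSub C I) (le_sumSub C I) with h | h
  · exact absurd (h ▸ ideal_le_sumSub C I) hI
  · have : b ∈ (sumSub C I).carrier := h ▸ Set.mem_univ b
    exact this

theorem index_eq_aux {G : Type*} [Group G] (H : Subgroup G) (p : ℕ) (f : Fin p → G)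
    (h1 : ∀ g, ∃ n, (f n)⁻¹ * g ∈ H) (h2 : ∀ n m, (f n)⁻¹ * f m ∈ H → n = m) :
    H.index = p := by
  have hb : Function.Bijective (fun n => (QuotientGroup.mk (f n) : G ⧸ H)) := by
    constructor
    · intro n m h
      exact h2 n m (QuotientGroup.eq.1 h)
    · intro g
      induction g using QuotientGroup.induction_on with
      | H g =>
        obtain ⟨n, hn⟩ := h1 g
        exact ⟨n, QuotientGroup.eq.2 hn⟩
  rw [Subgroup.index, ← Nat.card_congr (Equiv.ofBijective _ hb), Nat.card_fin]

theorem add_index_eq_aux {G : Type*} [AddGroup G] (H : AddSubgroup G) (p : ℕ) (f : Fin p → G)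
    (h1 : ∀ g, ∃ n, -(f n) + g ∈ H) (h2 : ∀ n m, -(f n) + f m ∈ H → n = m) :
    H.index = p := by
  have hb : Function.Bijective (fun n => (QuotientAddGroup.mk (f n) : G ⧸ H)) := by
    constructor
    · intro n m h
      exact h2 n m (QuotientAddGroup.eq.1 h)
    · intro g
      induction g using QuotientAddGroup.induction_on with
      | H g =>
        obtain ⟨n, hn⟩ := h1 g
        exact ⟨n, QuotientAddGroup.eq.2 hn⟩
  rw [AddSubgroup.index, ← Nat.card_congr (Equiv.ofBijective _ hb), Nat.card_fin]

theorem coatom_aux {G : Type*} [Group G] (H : Subgroup G) (p : ℕ) (hp : p.Prime)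
    (h : H.index = p) : IsCoatom H := by
  constructor
  · rintro rfl
    rw [Subgroup.index_top] at h
    exact hp.one_lt.ne h
  · intro K hK
    have h3 := Subgroup.relIndex_mul_index hK.le
    rw [h] at h3
    rcases hp.eq_one_or_self_of_dvd K.index ⟨_, by rw [mul_comm]; exact h3.symm⟩ with h4 | h4
    · exact Subgroup.index_eq_one.1 h4
    · rw [h4] at h3
      have h5 : H.relIndex K = 1 := Nat.eq_of_mul_eq_mul_right hp.pos (by rw [h3, one_mul])
      exact absurd (Subgroup.relIndex_eq_one.1 h5) hK.not_ge

theorem add_coatom_aux {G : Type*} [AddGroup G] (H : AddSubgroup G) (p : ℕ) (hp : p.Prime)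
    (h : H.index = p) : IsCoatom H := by
  constructor
  · rintro rfl
    rw [AddSubgroup.index_top] at h
    exact hp.one_lt.ne h
  · intro K hK
    have h3 := AddSubgroup.relIndex_mul_index hK.le
    rw [h] at h3
    rcases hp.eq_one_or_self_of_dvd K.index ⟨_, by rw [mul_comm]; exact h3.symm⟩ with h4 | h4
    · exact AddSubgroup.index_eq_one.1 h4
    · rw [h4] at h3
      have h5 : H.relIndex K = 1 := Nat.eq_of_mul_eq_mul_right hp.pos (by rw [h3, one_mul])
      exact absurd (AddSubgroup.relIndex_eq_one.1 h5) hK.not_ge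

theorem prime_dvd_aux (H : AddSubgroup B) (x : B) (hx : x ∉ H) (p : ℕ) (hp : p.Prime)
    (hpx : p • x ∈ H) (n : ℤ) (hn : n • x ∈ H) : (p : ℤ) ∣ n := by
  by_contra hd
  have hc : IsCoprime (p : ℤ) n := (Nat.prime_iff_prime_int.1 hp).coprime_iff_not_dvd.2 hd
  obtain ⟨a, b, hab⟩ := hc
  apply hx
  have : x = a • (p • x) + b • (n • x) := by
    rw [← natCast_zsmul, ← mul_zsmul', ← mul_zsmul', ← add_zsmul]
    rw [mul_comm (p : ℤ), mul_comm n, hab, one_zsmul]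
  rw [this]
  exact H.add_mem (H.zsmul_mem hpx a) (H.zsmul_mem hn b)

theorem prime_case (C : Subbrace B) (K I : BraceIdeal B)
    (hmax : ∀ D : Subbrace B, C.carrier ⊆ D.carrier →
      D.carrier = C.carrier ∨ D.carrier = Set.univ)
    (hK : K.carrier ⊆ C.carrier) (hI : ¬ I.carrier ⊆ C.carrier) (p : ℕ)
    (h : QuotPrimeOrder K.carrier I.carrier p) :
    p.Prime ∧ C.addSubgroup.index = p ∧ C.subgroup.index = p := by
  obtain ⟨hp, x, hxI, hxK, hpx, hgen⟩ := h
  have hxC : x ∉ C.addSubgroup := by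
    intro hx
    apply hI
    intro y hy
    obtain ⟨n, hn⟩ := hgen y hy
    have := C.addSubgroup.add_mem (C.addSubgroup.zsmul_mem hx n) (hK hn)
    change y ∈ C.addSubgroup
    simpa using this
  have hmulK : ∀ n : ℤ, (p : ℤ) ∣ n → n • x ∈ K.carrier := by
    rintro n ⟨k, rfl⟩
    rw [mul_comm, mul_zsmul, natCast_zsmul]
    exact K.toSubbrace.addSubgroup.zsmul_mem hpx k
  have hCI : ∀ y ∈ C.carrier, y ∈ I.carrier → y ∈ K.carrier := by
    intro y hyC hyI
    obtain ⟨n, hn⟩ := hgen y hyI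
    have h1 : n • x ∈ C.addSubgroup := by
      have := C.addSubgroup.add_mem hyC (C.addSubgroup.neg_mem (hK hn))
      simpa using this
    have h2 := prime_dvd_aux _ x hxC p hp (hK hpx) n h1
    have := K.add_mem (hmulK n h2) hn
    simpa using this
  have hgen' : ∀ y ∈ I.carrier, ∃ n : Fin p, -((n : ℕ) • x) + y ∈ K.carrier := by
    intro y hy
    obtain ⟨n, hn⟩ := hgen y hy
    have hpz : (p : ℤ) ≠ 0 := by exact_mod_cast hp.ne_zero
    have h0 := Int.emod_nonneg n hpz
    have h1 := Int.emod_lt_of_pos n (by exact_mod_cast hp.pos : (0 : ℤ) < p)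
    refine ⟨⟨(n % p).toNat, by omega⟩, ?_⟩
    have h2 := hmulK (-(n % p) + n) ⟨n / p, by have := Int.emod_add_mul_ediv n p; lia⟩
    have h3 := K.add_mem h2 hn
    have e : ((n % p).toNat : ℕ) • x = (n % p) • x := by
      rw [← natCast_zsmul, Int.toNat_of_nonneg h0]
    simp only [e]
    simpa [add_zsmul, neg_zsmul, add_assoc] using h3
  have hI_nsmul : ∀ n : ℕ, n • x ∈ I.carrier :=
    fun n => I.toSubbrace.addSubgroup.nsmul_mem hxI n
  have hinj : ∀ n m : Fin p, -((n : ℕ) • x) + (m : ℕ) • x ∈ K.carrier → n = m := by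
    intro n m h
    have h1 : (-((n : ℕ) : ℤ) + ((m : ℕ) : ℤ)) • x ∈ K.toSubbrace.addSubgroup := by
      rw [add_zsmul, neg_zsmul, natCast_zsmul, natCast_zsmul]
      exact h
    have h2 := prime_dvd_aux _ x hxK p hp hpx _ h1
    have hn := n.2
    have hm := m.2
    have h3 : (-((n : ℕ) : ℤ) + ((m : ℕ) : ℤ)) = 0 := by
      apply Int.eq_zero_of_abs_lt_dvd h2
      rw [abs_lt]
      constructor <;> omega
    ext
    omega
  refine ⟨hp, ?_, ?_⟩
  · refine add_index_eq_aux _ p (fun n => (n : ℕ) • x) ?_ ?_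
    · intro g
      obtain ⟨c, hc, h⟩ := sumSub_eq_univ C I hmax hI g
      obtain ⟨n, hn⟩ := hgen' _ (I.addConj_mem c h)
      refine ⟨n, ?_⟩
      have := C.add_mem (hK hn) hc
      change -((n : ℕ) • x) + g ∈ C.carrier
      simpa [add_assoc] using this
    · intro n m h
      exact hinj n m (hCI _ h (I.add_mem (I.neg_mem (hI_nsmul n)) (hI_nsmul m)))
  · refine index_eq_aux _ p (fun n => (n : ℕ) • x) ?_ ?_
    · intro g
      obtain ⟨c, hc, h⟩ := sumSub_eq_univ C I hmax hI g
      rw [← I.inv_mul_mem_iff] at h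
      obtain ⟨n, hn⟩ := hgen' _ (I.mulConj_mem c h)
      rw [← K.inv_mul_mem_iff] at hn
      refine ⟨n, ?_⟩
      have := C.mul_mem (hK hn) hc
      change ((n : ℕ) • x)⁻¹ * g ∈ C.carrier
      simpa [mul_assoc] using this
    · intro n m h
      exact hinj n m ((K.inv_mul_mem_iff _ _).1
        (hCI _ h (I.mul_mem (I.inv_mem (hI_nsmul n)) (hI_nsmul m))))

/-- Congruence modulo an ideal. -/
def Cong (J : BraceIdeal B) (a b : B) : Prop := -a + b ∈ J.carrier

theorem BraceIdeal.normal (J : BraceIdeal B) : J.toSubbrace.addSubgroup.Normal :=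
  ⟨fun a ha b => J.addConj_mem b ha⟩

/-- The ideal `qI + J`. -/
def qIdeal (J I : BraceIdeal B) (hJI : J.carrier ⊆ I.carrier)
    (hsoc : ∀ x ∈ I.carrier, MemSocQuot J.carrier x) (q : ℕ) : BraceIdeal B :=
  haveI := J.normal
  let π := QuotientAddGroup.mk' J.toSubbrace.addSubgroup
  have hπ : ∀ a b : B, π a = π b ↔ -a + b ∈ J.carrier := fun a b => QuotientAddGroup.eq
  have hcen : ∀ a ∈ I.carrier, ∀ b, π a + π b = π b + π a := fun a ha b => by
    rw [← map_add, ← map_add]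
    exact ((hπ _ _).2 ((hsoc a ha).2.2 b trivial)).symm
  have hadd : ∀ {a b : B},
      a ∈ {y | y ∈ I.carrier ∧ ∃ z ∈ I.carrier, π y = q • π z} →
      b ∈ {y | y ∈ I.carrier ∧ ∃ z ∈ I.carrier, π y = q • π z} →
      a + b ∈ {y | y ∈ I.carrier ∧ ∃ z ∈ I.carrier, π y = q • π z} := by
    rintro a b ⟨ha, z, hz, e⟩ ⟨hb, w, hw, e'⟩
    refine ⟨I.add_mem ha hb, z + w, I.add_mem hz hw, ?_⟩
    rw [map_add, map_add, e, e']
    exact ((show AddCommute (π z) (π w) from hcen z hz w).add_nsmul q).symm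
  have hneg : ∀ {a : B},
      a ∈ {y | y ∈ I.carrier ∧ ∃ z ∈ I.carrier, π y = q • π z} →
      -a ∈ {y | y ∈ I.carrier ∧ ∃ z ∈ I.carrier, π y = q • π z} := by
    rintro a ⟨ha, z, hz, e⟩
    exact ⟨I.neg_mem ha, -z, I.neg_mem hz, by rw [map_neg, map_neg, e, neg_nsmul]⟩
  have hlam : ∀ (b : B) {a : B},
      a ∈ {y | y ∈ I.carrier ∧ ∃ z ∈ I.carrier, π y = q • π z} →
      lam b a ∈ {y | y ∈ I.carrier ∧ ∃ z ∈ I.carrier, π y = q • π z} := by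
    rintro b a ⟨ha, z, hz, e⟩
    refine ⟨I.lam_mem b ha, lam b z, I.lam_mem b hz, ?_⟩
    rw [← map_nsmul] at e ⊢
    rw [hπ] at e ⊢
    have := J.lam_mem b e
    rw [← lamHom_apply, map_add, map_neg, map_nsmul] at this
    exact this
  have hconj : ∀ (b : B) {a : B},
      a ∈ {y | y ∈ I.carrier ∧ ∃ z ∈ I.carrier, π y = q • π z} →
      b + a + -b ∈ {y | y ∈ I.carrier ∧ ∃ z ∈ I.carrier, π y = q • π z} := by
    rintro b a ⟨ha, z, hz, e⟩
    refine ⟨I.addConj_mem b ha, z, hz, ?_⟩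
    rw [map_add, map_add, ← hcen a ha b, ← map_add, ← map_add, add_neg_cancel_right, e]
  have hJ : ∀ {a : B}, a ∈ J.carrier →
      a ∈ {y | y ∈ I.carrier ∧ ∃ z ∈ I.carrier, π y = q • π z} := by
    intro a ha
    refine ⟨hJI ha, 0, I.zero_mem, ?_⟩
    rw [← map_nsmul, hπ, smul_zero, add_zero]
    exact J.neg_mem ha
  { carrier := {y | y ∈ I.carrier ∧ ∃ z ∈ I.carrier, π y = q • π z}
    zero_mem := hJ J.zero_mem
    add_mem := hadd
    neg_mem := hneg
    mul_mem := by
      intro a b ha hb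
      rw [mul_eq_add_lam]
      exact hadd ha (hlam a hb)
    inv_mem := by
      intro a ha
      rw [inv_eq_neg_lam]
      exact hneg (hlam _ ha)
    addConj_mem := hconj
    mulConj_mem := by
      intro b a ha
      have h1 := (hsoc a ha.1).2.1 b⁻¹ trivial
      have h2 := J.lam_mem b h1
      have e : b * a * b⁻¹ = (b + lam b a + -b) + lam b (-b⁻¹ + lam a b⁻¹) := by
        rw [mul_assoc, mul_eq_add_lam a, mul_eq_add_lam b, lam_add, lam_add,
          ← lamHom_apply b (-b⁻¹), map_neg, lamHom_apply, lam_inv_self]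
        simp [add_assoc]
      rw [e]
      exact hadd (hconj b (hlam b ha)) (hJ h2)
    lam_mem := hlam }

theorem mem_qIdeal (J I : BraceIdeal B) (hJI : J.carrier ⊆ I.carrier)
    (hsoc : ∀ x ∈ I.carrier, MemSocQuot J.carrier x) (q : ℕ) (y : B) :
    y ∈ (qIdeal J I hJI hsoc q).carrier ↔
      y ∈ I.carrier ∧ ∃ z ∈ I.carrier, -(q • z) + y ∈ J.carrier := by
  haveI := J.normal
  change (y ∈ I.carrier ∧ ∃ z ∈ I.carrier,
    QuotientAddGroup.mk' J.toSubbrace.addSubgroup y =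
      q • QuotientAddGroup.mk' J.toSubbrace.addSubgroup z) ↔ _
  refine and_congr_right fun _ => exists_congr fun z => and_congr_right fun _ => ?_
  rw [← map_nsmul, eq_comm]
  exact QuotientAddGroup.eq

theorem cyclic_case (C : Subbrace B) (J I : BraceIdeal B)
    (hmax : ∀ D : Subbrace B, C.carrier ⊆ D.carrier →
      D.carrier = C.carrier ∨ D.carrier = Set.univ)
    (hJI : J.carrier ⊆ I.carrier)
    (hJ : J.carrier ⊆ C.carrier) (hI : ¬ I.carrier ⊆ C.carrier)
    (h : QuotAddInfCyclic J.carrier I.carrier)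
    (hsoc : ∀ x ∈ I.carrier, MemSocQuot J.carrier x) :
    ∃ (p : ℕ) (K : BraceIdeal B), K.carrier ⊆ C.carrier ∧
      QuotPrimeOrder K.carrier I.carrier p := by
  obtain ⟨x, hxI, hgen, -⟩ := h
  have hxC : x ∉ C.addSubgroup := by
    intro hx
    apply hI
    intro y hy
    obtain ⟨n, hn⟩ := hgen y hy
    have := C.addSubgroup.add_mem (C.addSubgroup.zsmul_mem hx n) (hJ hn)
    change y ∈ C.addSubgroup
    simpa using this
  let S : AddSubgroup ℤ := C.addSubgroup.comap (zmultiplesHom B x)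
  have hS : ∀ n : ℤ, n ∈ S ↔ n • x ∈ C.addSubgroup := fun n => Iff.rfl
  obtain ⟨d, hd⟩ := Int.subgroup_cyclic S
  have hdm : ∀ n : ℤ, n ∈ S ↔ d ∣ n := by
    intro n
    rw [hd, ← AddSubgroup.zmultiples_eq_closure, Int.mem_zmultiples_iff]
  have hd1 : d.natAbs ≠ 1 := by
    intro h1
    apply hxC
    have : (1 : ℤ) ∈ S := (hdm 1).2 (Int.natAbs_dvd.1 (by rw [h1]; exact dvd_rfl))
    simpa using (hS 1).1 this
  obtain ⟨q, hq, hqd⟩ := Nat.exists_prime_and_dvd hd1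
  have hqd' : (q : ℤ) ∣ d := Int.natCast_dvd.2 hqd
  have hKC : (qIdeal J I hJI hsoc q).carrier ⊆ C.carrier := by
    by_contra hK
    obtain ⟨c, hc, hk⟩ := sumSub_eq_univ C _ hmax hK x
    obtain ⟨hk1, z, hz, hzk⟩ := (mem_qIdeal _ _ _ _ _ _).1 hk
    obtain ⟨n, hn⟩ := hgen z hz
    haveI := J.normal
    let π := QuotientAddGroup.mk' J.toSubbrace.addSubgroup
    have hπ : ∀ a b : B, π a = π b ↔ -a + b ∈ J.carrier := fun a b => QuotientAddGroup.eq
    have e1 := (hπ _ _).2 hzk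
    have e2 := (hπ _ _).2 hn
    rw [map_nsmul, ← e2, map_add, map_zsmul, map_neg] at e1
    have e3 : π c = π ((1 - q * n) • x) := by
      have e4 : π c = π x + -(q • n • π x) := by rw [e1]; simp
      rw [e4, map_zsmul, sub_zsmul, one_zsmul, mul_comm, mul_zsmul', natCast_zsmul]
    have e5 : (1 - q * n) • x ∈ C.addSubgroup := by
      have := C.add_mem hc (hJ ((hπ _ _).1 e3))
      change (1 - q * n) • x ∈ C.carrier
      simpa using this
    have e6 : (q : ℤ) ∣ 1 - q * n := hqd'.trans ((hdm _).1 ((hS _).2 e5))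
    have e7 : (q : ℤ) ∣ 1 := by
      have := dvd_add e6 (dvd_mul_right (q : ℤ) n)
      simpa using this
    exact hq.one_lt.ne' (by exact_mod_cast Int.eq_one_of_dvd_one (by positivity) e7)
  refine ⟨q, _, hKC, hq, x, hxI, fun hx => hxC (hKC hx), ?_, ?_⟩
  · rw [mem_qIdeal]
    exact ⟨I.toSubbrace.addSubgroup.nsmul_mem hxI q, x, hxI, by simpa using J.zero_mem⟩
  · intro y hy
    obtain ⟨n, hn⟩ := hgen y hy
    refine ⟨n, ?_⟩
    rw [mem_qIdeal]
    exact ⟨hJI hn, 0, I.zero_mem, by simpa using hn⟩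

end aux

/-- In a supersoluble brace `B`, every maximal subbrace `C` has prime index: the
additive and multiplicative indices coincide and equal a prime `p`; in particular
`(C,+)` is a maximal subgroup of `(B,+)` and `(C,·)` is a maximal subgroup of
`(B,·)`, both of prime index. -/
theorem maximal_subbrace_prime_index (B : Type*) [SkewBrace B]
    (hB : IsSupersoluble B) (C : Subbrace B) (hne : C.carrier ≠ Set.univ)
    (hmax : ∀ D : Subbrace B, C.carrier ⊆ D.carrier →
      D.carrier = C.carrier ∨ D.carrier = Set.univ) :
    ∃ p : ℕ, p.Prime ∧ C.addSubgroup.index = p ∧ C.subgroup.index = p ∧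
      IsCoatom C.addSubgroup ∧ IsCoatom C.subgroup := by
  obtain ⟨n, I, h0, hn, hle, hstep⟩ := hB
  have key : ∃ i, i < n ∧ (I i).carrier ⊆ C.carrier ∧ ¬ (I (i + 1)).carrier ⊆ C.carrier := by
    by_contra hcon
    push Not at hcon
    have : ∀ i, i ≤ n → (I i).carrier ⊆ C.carrier := by
      intro i
      induction i with
      | zero =>
        intro _
        rw [h0]
        exact Set.singleton_subset_iff.2 C.zero_mem
      | succ k ih => exact fun hk => hcon k hk (ih (by omega))
    have h1 := this n le_rfl
    rw [hn] at h1
    exact hne (Set.univ_subset_iff.1 h1)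
  obtain ⟨i, hi, hJ, hI⟩ := key
  have h2 : ∃ (p : ℕ) (K : BraceIdeal B), K.carrier ⊆ C.carrier ∧
      QuotPrimeOrder K.carrier (I (i + 1)).carrier p := by
    rcases hstep i hi with ⟨h, hs⟩ | ⟨p, h⟩
    · exact cyclic_case C _ _ hmax (hle i hi) hJ hI h hs
    · exact ⟨p, _, hJ, h⟩
  obtain ⟨p, K, hK, hp⟩ := h2
  obtain ⟨hp, ha, hm⟩ := prime_case C K _ hmax hK hI p hp
  exact ⟨p, hp, ha, hm, add_coatom_aux _ p hp ha, coatom_aux _ p hp hm⟩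

end SkewBrace
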